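/- arXiv:2110.11721 — 11 statements merged into one kernel-verified Lean document; each statement's English description precedes it below -/
import Mathlib

section
/- Let t0 be a nonnegative integer and let r1, r2, c1, c2 be real numbers with 0 < r1 ≤ 1, r1 ≤ r2 ≤ 2·r1, c1 > 1, c2 ≥ 0, and c1 ≤ (1 + t0)^{r1}. Let ψ : ℕ → ℝ satisfy, for every integer t ≥ 1, ψ(t+1) ≤ (1 − c1/(t + t0)^{r1})·ψ(t) + c2/(t + t0)^{r2}. Then for every integer t ≥ 0, ψ(t+1) ≤ c/(t + t0 + 1)^{r2 − r1}, where c = max{ψ(1)·(t0 + 1)^{r2 − r1}, c2/(c1 − 1)}. -/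
open Real

/-!
With `x = t + t0`, `s = r2 - r1` and `c` the maximum in the statement, the claim `ψ t ≤ c / x ^ s`
is proved by induction. Since `1 - c1 / x ^ r1 ≥ 0` and `c2 ≤ c * (c1 - 1)`, the recursion gives
`ψ (t + 1) ≤ (c / x ^ s) * (1 - 1 / x ^ r1)`. The induction closes because `s ≤ 1` and `r1 ≤ 1`
give `(1 + 1 / x) ^ s ≤ 1 + 1 / x ≤ 1 + 1 / x ^ r1`, and `(1 + u) * (1 - u) ≤ 1`.
-/

/-- One step of the decay: the contraction factor `1 - 1 / x ^ r` pays for the passage from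
`x ^ s` to `(x + 1) ^ s`. -/
lemma one_sub_div_rpow_le {x r s : ℝ} (hx : 1 ≤ x) (hr0 : 0 ≤ r) (hr : r ≤ 1) (hs : s ≤ 1) :
    (1 - 1 / x ^ r) / x ^ s ≤ 1 / (x + 1) ^ s := by
  have hx0 : 0 < x := by linarith
  have hB : 0 < x ^ s := rpow_pos_of_pos hx0 s
  have hA : 1 ≤ x ^ r := one_le_rpow hx hr0
  have hAx : x ^ r ≤ x := by simpa using rpow_le_rpow_of_exponent_le hx hr
  have hinv : 1 / x ≤ 1 / x ^ r := one_div_le_one_div_of_le (by linarith) hAx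
  have hA1 : 1 / x ^ r ≤ 1 := by rw [div_le_one (by linarith)]; exact hA
  have hpow : (1 + 1 / x) ^ s ≤ 1 + 1 / x := by
    have h1 : 1 ≤ 1 + 1 / x := by
      have : 0 < 1 / x := by positivity
      linarith
    simpa using rpow_le_rpow_of_exponent_le h1 hs
  have hsplit : (x + 1) ^ s = x ^ s * (1 + 1 / x) ^ s := by
    rw [← mul_rpow hx0.le (by positivity)]
    congr 1
    field_simp
  rw [div_le_div_iff₀ hB (by positivity), hsplit]
  have key : (1 - 1 / x ^ r) * (1 + 1 / x) ^ s ≤ 1 := by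
    calc (1 - 1 / x ^ r) * (1 + 1 / x) ^ s
        ≤ (1 - 1 / x ^ r) * (1 + 1 / x ^ r) :=
          mul_le_mul_of_nonneg_left (by linarith) (by linarith)
      _ ≤ 1 := by nlinarith [sq_nonneg (1 / x ^ r)]
  nlinarith

/-- Sequence-decay lemma (Lemma 5 of the paper). -/
theorem sequence_decay_lemma
    (t0 : ℕ) (r1 r2 c1 c2 : ℝ) (ψ : ℕ → ℝ)
    (hr1pos : 0 < r1) (hr1le : r1 ≤ 1) (hr12 : r1 ≤ r2) (hr2le : r2 ≤ 2 * r1)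
    (hc1 : 1 < c1) (hc2 : 0 ≤ c2)
    (hc1le : c1 ≤ (1 + (t0 : ℝ)) ^ r1)
    (hrec : ∀ t : ℕ, 1 ≤ t →
      ψ (t + 1) ≤ (1 - c1 / ((t : ℝ) + (t0 : ℝ)) ^ r1) * ψ t
        + c2 / ((t : ℝ) + (t0 : ℝ)) ^ r2) :
    ∀ t : ℕ,
      ψ (t + 1) ≤
        max (ψ 1 * ((t0 : ℝ) + 1) ^ (r2 - r1)) (c2 / (c1 - 1)) /
          ((t : ℝ) + (t0 : ℝ) + 1) ^ (r2 - r1) := by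
  intro t
  have hd : 0 < c1 - 1 := by linarith
  have hcL := le_max_left (ψ 1 * ((t0 : ℝ) + 1) ^ (r2 - r1)) (c2 / (c1 - 1))
  have hcR := le_max_right (ψ 1 * ((t0 : ℝ) + 1) ^ (r2 - r1)) (c2 / (c1 - 1))
  generalize max (ψ 1 * ((t0 : ℝ) + 1) ^ (r2 - r1)) (c2 / (c1 - 1)) = c at hcL hcR ⊢
  have hc0 : 0 ≤ c := le_trans (by positivity) hcR
  have hc2c : c2 ≤ c * (c1 - 1) := (div_le_iff₀ hd).1 hcR
  induction t with
  | zero =>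
    rw [le_div_iff₀ (by positivity)]
    simpa using hcL
  | succ n ih =>
    have h := hrec (n + 1) (by omega)
    have hn0 : (0 : ℝ) ≤ n := n.cast_nonneg
    have ht0 : (0 : ℝ) ≤ t0 := t0.cast_nonneg
    obtain ⟨x, hx⟩ : ∃ x : ℝ, x = (n : ℝ) + t0 + 1 := ⟨_, rfl⟩
    have e1 : ((n + 1 : ℕ) : ℝ) + t0 = x := by rw [hx]; push_cast; ring
    rw [e1] at h ⊢
    rw [← hx] at ih
    have hx1 : 1 ≤ x := by linarith
    have hx0 : 0 < x := by linarith
    have hA : 0 < x ^ r1 := rpow_pos_of_pos hx0 _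
    have hB : 0 < x ^ (r2 - r1) := rpow_pos_of_pos hx0 _
    have hcA : c1 ≤ x ^ r1 :=
      hc1le.trans (rpow_le_rpow (by positivity) (by linarith) hr1pos.le)
    have hfac : 0 ≤ 1 - c1 / x ^ r1 := by
      have : c1 / x ^ r1 ≤ 1 := (div_le_one hA).2 hcA
      linarith
    have hx2 : x ^ r2 = x ^ r1 * x ^ (r2 - r1) := by
      rw [← rpow_add hx0]; congr 1; ring
    calc ψ (n + 1 + 1)
        ≤ (1 - c1 / x ^ r1) * ψ (n + 1) + c2 / x ^ r2 := h
      _ ≤ (1 - c1 / x ^ r1) * (c / x ^ (r2 - r1))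
            + c * (c1 - 1) / (x ^ r1 * x ^ (r2 - r1)) := by
          rw [hx2]; gcongr
      _ = c * ((1 - 1 / x ^ r1) / x ^ (r2 - r1)) := by field_simp; ring
      _ ≤ c * (1 / (x + 1) ^ (r2 - r1)) :=
          mul_le_mul_of_nonneg_left
            (one_sub_div_rpow_le hx1 hr1pos.le hr1le (by linarith)) hc0
      _ = c / (x + 1) ^ (r2 - r1) := by ring
end

section
/- For all real numbers x, p, q with x ≥ 1 and 0 ≤ p − q ≤ q ≤ 1, it holds that x^{−(p−q)} − x^{−p} ≤ (x + 1)^{−(p−q)}. -/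
open Real

/-!
Put `r = p - q ∈ [0, 1]`. Dividing by `x ^ (-r)`, the claim becomes
`1 - x ^ (-q) ≤ (1 + x⁻¹) ^ (-r)`. Since `x ≥ 1` and `q, r ≤ 1`, both sides are compared with
the case of exponent `-1`:
`1 - x ^ (-q) ≤ 1 - x⁻¹ ≤ (1 + x⁻¹)⁻¹ ≤ (1 + x⁻¹) ^ (-r)`.
-/

/-- Elementary real-power inequality: for x ≥ 1 and 0 ≤ p − q ≤ q ≤ 1,
`x^{-(p-q)} - x^{-p} ≤ (x+1)^{-(p-q)}`. -/
theorem rpow_diff_inequality (x p q : ℝ) (hx : 1 ≤ x)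
    (h0 : 0 ≤ p - q) (h1 : p - q ≤ q) (h2 : q ≤ 1) :
    x ^ (-(p - q)) - x ^ (-p) ≤ (x + 1) ^ (-(p - q)) := by
  have hx0 : 0 < x := by linarith
  have hinv : 0 < x⁻¹ := inv_pos.mpr hx0
  have hp : x ^ (-p) = x ^ (-(p - q)) * x ^ (-q) := by
    rw [← rpow_add hx0]
    congr 1
    ring
  have hx1 : (x + 1) ^ (-(p - q)) = x ^ (-(p - q)) * (1 + x⁻¹) ^ (-(p - q)) := by
    rw [← mul_rpow hx0.le (by positivity)]
    congr 1
    field_simp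
  have hq : x⁻¹ ≤ x ^ (-q) := by
    rw [← rpow_neg_one]
    exact rpow_le_rpow_of_exponent_le hx (by linarith)
  have hr : (1 + x⁻¹)⁻¹ ≤ (1 + x⁻¹) ^ (-(p - q)) := by
    rw [← rpow_neg_one (1 + x⁻¹)]
    exact rpow_le_rpow_of_exponent_le (by linarith) (by linarith)
  have hmid : 1 - x⁻¹ ≤ (1 + x⁻¹)⁻¹ := by
    rw [← one_div (1 + x⁻¹), le_div_iff₀ (by positivity)]
    nlinarith [sq_nonneg x⁻¹]
  have hpos : 0 ≤ x ^ (-(p - q)) := by positivity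
  rw [hp, hx1]
  calc x ^ (-(p - q)) - x ^ (-(p - q)) * x ^ (-q)
      = x ^ (-(p - q)) * (1 - x ^ (-q)) := by ring
    _ ≤ x ^ (-(p - q)) * (1 + x⁻¹) ^ (-(p - q)) :=
      mul_le_mul_of_nonneg_left (by linarith) hpos
end

section
/- Let (Ω, P) be a probability space and H a real Hilbert space. Let Ψ0, Ψ1 : Ω → H be strongly measurable random vectors with E‖Ψ0‖² < ∞ and E‖Ψ1‖² < ∞, and set m0 = E[Ψ0], m1 = E[Ψ1]. Let y₋ ∈ H and δ ∈ ℝ, and define y(ω) = (1 − δ)(y₋ − Ψ0(ω)) + Ψ1(ω). Then E‖y − m1‖² ≤ (1 − δ)²·‖y₋ − m0‖² + 2(1 − δ)²·E‖Ψ1 − Ψ0‖² + 2δ²·E‖Ψ1 − m1‖². -/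
/-!
The tracking error splits as `y - m1 = Z + (1 - δ) • (yprev - m0)`, where
`Z = (1 - δ) • (D - E D) + δ • (Ψ1 - m1)` and `D = Ψ1 - Ψ0`. The noise `Z` is centered, so the cross
term vanishes in expectation and `E‖y - m1‖² = (1 - δ)² ‖yprev - m0‖² + E‖Z‖²`. The parallelogram
bound `‖u + v‖² ≤ 2‖u‖² + 2‖v‖²` splits `E‖Z‖²`, and `E‖D - E D‖² ≤ E‖D‖²` gives the claim. Both
uses of centering are instances of `integral_norm_add_const_sq`.
-/

open MeasureTheory

theorem integral_norm_add_const_sq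
    {Ω : Type*} [MeasurableSpace Ω] (P : Measure Ω) [IsProbabilityMeasure P]
    {H : Type*} [NormedAddCommGroup H] [InnerProductSpace ℝ H] [CompleteSpace H]
    {X : Ω → H} (hX : MemLp X 2 P) (a : H) :
    ∫ ω, ‖X ω + a‖ ^ 2 ∂P = ∫ ω, ‖X ω‖ ^ 2 ∂P + 2 * inner ℝ a (∫ ω, X ω ∂P) + ‖a‖ ^ 2 := by
  have hXi : Integrable X P := hX.integrable (by norm_num)
  have hsq : Integrable (fun ω => ‖X ω‖ ^ 2) P := hX.integrable_norm_pow two_ne_zero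
  have hin : Integrable (fun ω => 2 * inner ℝ a (X ω)) P := (hXi.const_inner a).const_mul 2
  have hpt : ∀ ω, ‖X ω + a‖ ^ 2 = ‖X ω‖ ^ 2 + 2 * inner ℝ a (X ω) + ‖a‖ ^ 2 := fun ω => by
    rw [norm_add_sq_real, real_inner_comm]
  simp_rw [hpt]
  have hsum : Integrable (fun ω => ‖X ω‖ ^ 2 + 2 * inner ℝ a (X ω)) P := hsq.add hin
  rw [integral_add hsum (integrable_const _), integral_add hsq hin,
    integral_const_mul, integral_inner hXi]
  simp

/-- One-step momentum-tracking error bound (Lemma 6 of the paper). -/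
theorem momentum_tracking_error_bound
    {Ω : Type*} [MeasurableSpace Ω] (P : Measure Ω) [IsProbabilityMeasure P]
    {H : Type*} [NormedAddCommGroup H] [InnerProductSpace ℝ H] [CompleteSpace H]
    (Ψ0 Ψ1 : Ω → H)
    (hΨ0m : StronglyMeasurable Ψ0) (hΨ1m : StronglyMeasurable Ψ1)
    (hΨ0i : Integrable (fun ω => ‖Ψ0 ω‖ ^ 2) P)
    (hΨ1i : Integrable (fun ω => ‖Ψ1 ω‖ ^ 2) P)
    (m0 m1 : H) (hm0 : m0 = ∫ ω, Ψ0 ω ∂P) (hm1 : m1 = ∫ ω, Ψ1 ω ∂P)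
    (yprev : H) (δ : ℝ) :
    (∫ ω, ‖((1 - δ) • (yprev - Ψ0 ω) + Ψ1 ω) - m1‖ ^ 2 ∂P) ≤
      (1 - δ) ^ 2 * ‖yprev - m0‖ ^ 2 +
        2 * (1 - δ) ^ 2 * (∫ ω, ‖Ψ1 ω - Ψ0 ω‖ ^ 2 ∂P) +
        2 * δ ^ 2 * (∫ ω, ‖Ψ1 ω - m1‖ ^ 2 ∂P) := by
  have h0 : MemLp Ψ0 2 P := (memLp_two_iff_integrable_sq_norm hΨ0m.aestronglyMeasurable).2 hΨ0i
  have h1 : MemLp Ψ1 2 P := (memLp_two_iff_integrable_sq_norm hΨ1m.aestronglyMeasurable).2 hΨ1i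
  have i0 : Integrable Ψ0 P := h0.integrable (by norm_num)
  have i1 : Integrable Ψ1 P := h1.integrable (by norm_num)
  let D : Ω → H := fun ω => Ψ1 ω - Ψ0 ω
  let U : Ω → H := fun ω => D ω + (m0 - m1)
  let V : Ω → H := fun ω => Ψ1 ω - m1
  let Z : Ω → H := fun ω => (1 - δ) • U ω + δ • V ω
  have hD : MemLp D 2 P := h1.sub h0
  have hU : MemLp U 2 P := hD.add (memLp_const _)
  have hV : MemLp V 2 P := h1.sub (memLp_const _)
  have hZ : MemLp Z 2 P := (hU.const_smul (1 - δ)).add (hV.const_smul δ)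
  have eD : ∫ ω, D ω ∂P = m1 - m0 := by
    rw [hm0, hm1]; exact integral_sub i1 i0
  have iU : Integrable U P := hU.integrable (by norm_num)
  have iV : Integrable V P := hV.integrable (by norm_num)
  have eU : ∫ ω, U ω ∂P = 0 := by
    have h : ∫ ω, U ω ∂P = ∫ ω, D ω ∂P + ∫ _, (m0 - m1) ∂P :=
      integral_add (hD.integrable (by norm_num)) (integrable_const _)
    rw [h, eD]; simp
  have eV : ∫ ω, V ω ∂P = 0 := by
    have h : ∫ ω, V ω ∂P = ∫ ω, Ψ1 ω ∂P - ∫ _, m1 ∂P :=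
      integral_sub i1 (integrable_const _)
    rw [h, ← hm1]; simp
  have eZ : ∫ ω, Z ω ∂P = 0 := by
    have h : ∫ ω, Z ω ∂P = ∫ ω, (1 - δ) • U ω ∂P + ∫ ω, δ • V ω ∂P :=
      integral_add (iU.smul (1 - δ)) (iV.smul δ)
    rw [h, integral_smul, integral_smul, eU, eV]; simp
  have hsplit : ∀ ω, ((1 - δ) • (yprev - Ψ0 ω) + Ψ1 ω) - m1 = Z ω + (1 - δ) • (yprev - m0) := by
    intro ω
    simp only [Z, U, V, D]
    module
  have hUle : ∫ ω, ‖U ω‖ ^ 2 ∂P ≤ ∫ ω, ‖D ω‖ ^ 2 ∂P := by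
    have h := integral_norm_add_const_sq P hD (m0 - m1)
    -- The cross term is `-2‖m0 - m1‖²`, because `E D = -(m0 - m1)`.
    rw [eD, ← neg_sub m0 m1, inner_neg_right, real_inner_self_eq_norm_sq] at h
    have := sq_nonneg ‖m0 - m1‖
    change ∫ ω, ‖D ω + (m0 - m1)‖ ^ 2 ∂P ≤ _
    linarith
  have sU : Integrable (fun ω => 2 * (1 - δ) ^ 2 * ‖U ω‖ ^ 2) P :=
    (hU.integrable_norm_pow two_ne_zero).const_mul _
  have sV : Integrable (fun ω => 2 * δ ^ 2 * ‖V ω‖ ^ 2) P :=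
    (hV.integrable_norm_pow two_ne_zero).const_mul _
  have hZle : ∫ ω, ‖Z ω‖ ^ 2 ∂P ≤
      2 * (1 - δ) ^ 2 * ∫ ω, ‖U ω‖ ^ 2 ∂P + 2 * δ ^ 2 * ∫ ω, ‖V ω‖ ^ 2 ∂P := by
    rw [← integral_const_mul, ← integral_const_mul, ← integral_add sU sV]
    refine integral_mono (hZ.integrable_norm_pow two_ne_zero) (sU.add sV) fun ω => ?_
    have hp := parallelogram_law_with_norm ℝ ((1 - δ) • U ω) (δ • V ω)
    have hn := sq_nonneg ‖(1 - δ) • U ω - δ • V ω‖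
    have hu : ‖(1 - δ) • U ω‖ ^ 2 = (1 - δ) ^ 2 * ‖U ω‖ ^ 2 := by
      rw [norm_smul, mul_pow, Real.norm_eq_abs, sq_abs]
    have hv : ‖δ • V ω‖ ^ 2 = δ ^ 2 * ‖V ω‖ ^ 2 := by
      rw [norm_smul, mul_pow, Real.norm_eq_abs, sq_abs]
    rw [hu, hv] at hp
    change ‖(1 - δ) • U ω + δ • V ω‖ ^ 2 ≤ 2 * (1 - δ) ^ 2 * ‖U ω‖ ^ 2 + 2 * δ ^ 2 * ‖V ω‖ ^ 2
    linarith
  have hmul := mul_le_mul_of_nonneg_left hUle (by positivity : 0 ≤ 2 * (1 - δ) ^ 2)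
  simp_rw [hsplit]
  rw [integral_norm_add_const_sq P hZ, eZ, inner_zero_right, norm_smul, mul_pow,
    Real.norm_eq_abs, sq_abs]
  change _ ≤ (1 - δ) ^ 2 * ‖yprev - m0‖ ^ 2 + 2 * (1 - δ) ^ 2 * (∫ ω, ‖D ω‖ ^ 2 ∂P) +
    2 * δ ^ 2 * (∫ ω, ‖V ω‖ ^ 2 ∂P)
  linarith
end

section
/- Let H be a real Hilbert space, μ > 0, L > 0, and let g : H → ℝ be differentiable, μ-strongly convex, with L-Lipschitz gradient, and let y* ∈ H be its global minimizer. Let (Ω, P) be a probability space and G : Ω → H strongly measurable with E‖G‖² < ∞, E[G] = ∇g(y₋), and E‖G − ∇g(y₋)‖² ≤ σ²·(1 + ‖∇g(y₋)‖²) for a given point y₋ ∈ H and some σ ≥ 0. Let δ > 0 satisfy 2δ(1 + σ²)L² ≤ μ, and define y(ω) = y₋ − δ·G(ω). Then E‖y − y*‖² ≤ (1 − δμ)·‖y₋ − y*‖² + 2δ²σ². -/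
/-!
Expanding the square, `E‖y - y*‖² = ‖d‖² - 2δ⟪d, ∇g(y₋)⟫ + δ² E‖G‖²` with `d = y₋ - y*`.
Since `∇g(y*) = 0`, strong convexity used in both directions between `y₋` and `y*` gives
`⟪d, ∇g(y₋)⟫ ≥ μ‖d‖²`, and the Lipschitz bound gives `‖∇g(y₋)‖ ≤ L‖d‖`. The bias-variance
identity and the variance bound give `E‖G‖² ≤ (1 + σ²)‖∇g(y₋)‖² + σ²`, so the step-size condition
yields the factor `1 - 2δμ + δμ/2 ≤ 1 - δμ`.
-/

open MeasureTheory
open scoped RealInnerProductSpace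

/-- Second-moment expansion; it serves both for the SGD step and (with `c = 1`) for the
bias-variance identity. -/
lemma integral_norm_sub_smul_sq
    {H : Type*} [NormedAddCommGroup H] [InnerProductSpace ℝ H] [CompleteSpace H]
    {Ω : Type*} [MeasurableSpace Ω] (P : Measure Ω) [IsProbabilityMeasure P]
    (G : Ω → H) (hGm : StronglyMeasurable G)
    (hGi : Integrable (fun ω => ‖G ω‖ ^ 2) P) (a : H) (c : ℝ) :
    (∫ ω, ‖a - c • G ω‖ ^ 2 ∂P) =
      ‖a‖ ^ 2 - 2 * c * ⟪a, ∫ ω, G ω ∂P⟫ + c ^ 2 * ∫ ω, ‖G ω‖ ^ 2 ∂P := by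
  have hG : Integrable G P :=
    ((memLp_two_iff_integrable_sq_norm hGm.aestronglyMeasurable).2 hGi).integrable (by norm_num)
  have hin : Integrable (fun ω => ⟪a, G ω⟫) P := hG.const_inner a
  have hpt : ∀ ω, ‖a - c • G ω‖ ^ 2 =
      ‖a‖ ^ 2 - 2 * c * ⟪a, G ω⟫ + c ^ 2 * ‖G ω‖ ^ 2 := by
    intro ω
    rw [norm_sub_sq_real, inner_smul_right, norm_smul, mul_pow, Real.norm_eq_abs, sq_abs]
    ring
  have hsub : Integrable (fun ω => ‖a‖ ^ 2 - 2 * c * ⟪a, G ω⟫) P :=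
    (integrable_const _).sub (hin.const_mul _)
  simp_rw [hpt]
  rw [integral_add hsub (hGi.const_mul _),
    integral_sub (integrable_const _) (hin.const_mul _), integral_const_mul, integral_const_mul,
    integral_inner hG a]
  simp

/-- One-step stochastic-gradient contraction for a strongly convex inner problem
(the core of Lemma 1 of the paper). -/
theorem inner_sgd_contraction
    {H : Type*} [NormedAddCommGroup H] [InnerProductSpace ℝ H] [CompleteSpace H]
    (μ L : ℝ) (hμ : 0 < μ) (hL : 0 < L)
    (g : H → ℝ) (hdiff : Differentiable ℝ g)
    (hsc : ∀ y z : H,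
      g z ≥ g y + ⟪gradient g y, z - y⟫ + (μ / 2) * ‖z - y‖ ^ 2)
    (hlip : ∀ y z : H, ‖gradient g y - gradient g z‖ ≤ L * ‖y - z‖)
    (ystar : H) (hystar : ∀ z : H, g ystar ≤ g z)
    {Ω : Type*} [MeasurableSpace Ω] (P : Measure Ω) [IsProbabilityMeasure P]
    (G : Ω → H) (hGm : StronglyMeasurable G)
    (hGi : Integrable (fun ω => ‖G ω‖ ^ 2) P)
    (yprev : H)
    (hmean : (∫ ω, G ω ∂P) = gradient g yprev)
    (σ : ℝ) (hσ : 0 ≤ σ)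
    (hvar : (∫ ω, ‖G ω - gradient g yprev‖ ^ 2 ∂P) ≤
      σ ^ 2 * (1 + ‖gradient g yprev‖ ^ 2))
    (δ : ℝ) (hδ : 0 < δ) (hδμ : 2 * δ * (1 + σ ^ 2) * L ^ 2 ≤ μ) :
    (∫ ω, ‖(yprev - δ • G ω) - ystar‖ ^ 2 ∂P) ≤
      (1 - δ * μ) * ‖yprev - ystar‖ ^ 2 + 2 * δ ^ 2 * σ ^ 2 := by
  have hgrad : gradient g ystar = 0 := by
    have h : IsLocalMin g ystar := Filter.Eventually.of_forall hystar
    simp [gradient, h.fderiv_eq_zero]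
  have h1 := hsc yprev ystar
  have h2 := hsc ystar yprev
  have h3 := hlip yprev ystar
  rw [hgrad, inner_zero_left] at h2
  rw [hgrad, sub_zero] at h3
  rw [norm_sub_rev ystar yprev, ← neg_sub yprev ystar, inner_neg_right, real_inner_comm] at h1
  have hstep := integral_norm_sub_smul_sq P G hGm hGi (yprev - ystar) δ
  have hbias := integral_norm_sub_smul_sq P G hGm hGi (gradient g yprev) 1
  rw [hmean] at hstep hbias
  rw [real_inner_self_eq_norm_sq] at hbias
  simp_rw [one_smul, norm_sub_rev (gradient g yprev)] at hbias
  have hmono : μ * ‖yprev - ystar‖ ^ 2 ≤ ⟪yprev - ystar, gradient g yprev⟫ := by linarith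
  have hsq : ‖gradient g yprev‖ ^ 2 ≤ L ^ 2 * ‖yprev - ystar‖ ^ 2 := by
    rw [← mul_pow]
    exact pow_le_pow_left₀ (norm_nonneg _) h3 2
  have hE : (∫ ω, ‖G ω‖ ^ 2 ∂P) ≤
      (1 + σ ^ 2) * (L ^ 2 * ‖yprev - ystar‖ ^ 2) + σ ^ 2 := by
    have := mul_le_mul_of_nonneg_left hsq (by positivity : 0 ≤ 1 + σ ^ 2)
    linarith
  have hre : ∀ ω, yprev - δ • G ω - ystar = (yprev - ystar) - δ • G ω := fun ω => by abel
  simp_rw [hre]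
  rw [hstep]
  have e1 := mul_le_mul_of_nonneg_left hmono hδ.le
  have e2 := mul_le_mul_of_nonneg_left hE (sq_nonneg δ)
  have e3 := mul_le_mul_of_nonneg_left hδμ
    (by positivity : 0 ≤ δ * ‖yprev - ystar‖ ^ 2)
  have e4 : 0 ≤ δ * μ * ‖yprev - ystar‖ ^ 2 := by positivity
  have e5 : 0 ≤ δ ^ 2 * σ ^ 2 := by positivity
  linarith
end

section
/- Let H be a real Hilbert space, μ > 0, L > 0, and let g : H → ℝ be differentiable, μ-strongly convex, with L-Lipschitz gradient, and let y* ∈ H be its global minimizer. Let (Ω, P) be a probability space and G : Ω → H strongly measurable with E‖G‖² < ∞, E[G] = ∇g(y₋), and E‖G − ∇g(y₋)‖² ≤ σ²·(1 + ‖∇g(y₋)‖²) for a given y₋ ∈ H and some σ ≥ 0. Let δ > 0 satisfy δ ≤ 2/(3μ) and 2δ(1 + σ²)L² ≤ μ, define y(ω) = y₋ − δ·G(ω), and let y*' ∈ H be any point with ‖y*' − y*‖ ≤ K for some K ≥ 0. Then E‖y − y*'‖² ≤ (1 − δμ/2)·‖y₋ − y*‖² + (2/(δμ))·K² + 4δ²σ².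 -/
open MeasureTheory
open scoped RealInnerProductSpace

/-!
The mean square splits as `E‖(a - d) - δ G‖² = ‖a - d - δ n‖² + δ² E‖G - n‖²`, where
`a = yprev - ystar`, `d = ystar' - ystar` and `n = E G = ∇g(yprev)`. Thus the drift `d` only meets
the deterministic part. There Young's inequality is applied with the weights `2 / (2 - t)` and
`2 / t`, `t = δ μ`, which produce the coefficient of `K²` exactly. Since `∇g(ystar) = 0`, strong
convexity gives `⟪n, a⟫ ≥ μ ‖a‖²` and the Lipschitz bound gives `‖n‖ ≤ L ‖a‖`; with the step-size
condition the total coefficient of `‖a‖²` is at most `(2 - 3 t) / (2 - t)`, and this is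
at most `1 - t / 2` because `1 - 3 t / 2 ≤ (1 - t / 2)²`.
-/

/-- Bias-variance decomposition of the mean squared error of the step `b - δ • X`. -/
lemma integral_norm_sq_sub_smul {H : Type*} [NormedAddCommGroup H] [InnerProductSpace ℝ H]
    [CompleteSpace H] {Ω : Type*} [MeasurableSpace Ω] (P : Measure Ω) [IsProbabilityMeasure P]
    (X : Ω → H) (hX : MemLp X 2 P) (b n : H) (hn : ∫ ω, X ω ∂P = n) (δ : ℝ) :
    ∫ ω, ‖b - δ • X ω‖ ^ 2 ∂P = ‖b - δ • n‖ ^ 2 + δ ^ 2 * ∫ ω, ‖X ω - n‖ ^ 2 ∂P := by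
  have hX1 : Integrable X P := hX.integrable (by norm_num)
  have hZ : MemLp (fun ω => X ω - n) 2 P := hX.sub (memLp_const n)
  have hZ1 : Integrable (fun ω => X ω - n) P := hX1.sub (integrable_const n)
  have hZ2 : Integrable (fun ω => ‖X ω - n‖ ^ 2) P := hZ.integrable_norm_pow (by norm_num)
  have hcenter : ∫ ω, (X ω - n) ∂P = 0 := by
    rw [integral_sub hX1 (integrable_const n), hn]
    simp
  have hinner : ∫ ω, ⟪b - δ • n, X ω - n⟫ ∂P = 0 := by
    rw [integral_inner hZ1, hcenter, inner_zero_right]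
  have hexpand : ∀ ω, ‖b - δ • X ω‖ ^ 2 =
      ‖b - δ • n‖ ^ 2 - 2 * δ * ⟪b - δ • n, X ω - n⟫ + δ ^ 2 * ‖X ω - n‖ ^ 2 := by
    intro ω
    have h : b - δ • X ω = (b - δ • n) - δ • (X ω - n) := by
      rw [smul_sub]
      abel
    rw [h, norm_sub_sq_real, inner_smul_right, norm_smul, mul_pow, Real.norm_eq_abs, sq_abs]
    ring
  have hinnerInt : Integrable (fun ω => ⟪b - δ • n, X ω - n⟫) P := hZ1.const_inner _
  have hdiffInt : Integrable
      (fun ω => ‖b - δ • n‖ ^ 2 - 2 * δ * ⟪b - δ • n, X ω - n⟫) P :=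
    (integrable_const _).sub (hinnerInt.const_mul _)
  simp_rw [hexpand]
  rw [integral_add hdiffInt (hZ2.const_mul _),
    integral_sub (integrable_const _) (hinnerInt.const_mul _), integral_const_mul,
    integral_const_mul, hinner]
  simp

/-- Young's inequality with weights `2 / (2 - t)` and `2 / t`, denominators cleared. -/
lemma weighted_young {H : Type*} [NormedAddCommGroup H] [InnerProductSpace ℝ H]
    (u d : H) (t : ℝ) :
    t * (2 - t) * ‖u - d‖ ^ 2 ≤ 2 * t * ‖u‖ ^ 2 + 2 * (2 - t) * ‖d‖ ^ 2 := by
  -- The difference of the two sides is `‖t • u + (2 - t) • d‖ ^ 2`.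
  have h := sq_nonneg ‖t • u + (2 - t) • d‖
  rw [norm_add_sq_real, inner_smul_left, inner_smul_right, norm_smul, norm_smul, mul_pow,
    mul_pow, Real.norm_eq_abs, Real.norm_eq_abs, sq_abs, sq_abs] at h
  simp only [conj_trivial] at h
  rw [norm_sub_sq_real]
  linarith

lemma gradient_eq_zero_of_forall_le {H : Type*} [NormedAddCommGroup H] [InnerProductSpace ℝ H]
    [CompleteSpace H] (g : H → ℝ) (x : H) (hx : ∀ z, g x ≤ g z) : gradient g x = 0 := by
  have h : IsLocalMin g x := Filter.Eventually.of_forall hx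
  simp [gradient, h.fderiv_eq_zero]

/-- One-step form of Lemma 1 of the paper: stochastic-gradient contraction for the
inner problem, allowing a drift of the target minimizer. -/
theorem inner_sgd_contraction_with_drift
    {H : Type*} [NormedAddCommGroup H] [InnerProductSpace ℝ H] [CompleteSpace H]
    (μ L : ℝ) (hμ : 0 < μ) (hL : 0 < L)
    (g : H → ℝ) (hdiff : Differentiable ℝ g)
    (hsc : ∀ y z : H,
      g z ≥ g y + ⟪gradient g y, z - y⟫ + (μ / 2) * ‖z - y‖ ^ 2)
    (hlip : ∀ y z : H, ‖gradient g y - gradient g z‖ ≤ L * ‖y - z‖)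
    (ystar : H) (hystar : ∀ z : H, g ystar ≤ g z)
    {Ω : Type*} [MeasurableSpace Ω] (P : Measure Ω) [IsProbabilityMeasure P]
    (G : Ω → H) (hGm : StronglyMeasurable G)
    (hGi : Integrable (fun ω => ‖G ω‖ ^ 2) P)
    (yprev : H)
    (hmean : (∫ ω, G ω ∂P) = gradient g yprev)
    (σ : ℝ) (hσ : 0 ≤ σ)
    (hvar : (∫ ω, ‖G ω - gradient g yprev‖ ^ 2 ∂P) ≤
      σ ^ 2 * (1 + ‖gradient g yprev‖ ^ 2))
    (δ : ℝ) (hδ : 0 < δ) (hδ23 : δ ≤ 2 / (3 * μ))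
    (hδμ : 2 * δ * (1 + σ ^ 2) * L ^ 2 ≤ μ)
    (ystar' : H) (K : ℝ) (hK : 0 ≤ K) (hdrift : ‖ystar' - ystar‖ ≤ K) :
    (∫ ω, ‖(yprev - δ • G ω) - ystar'‖ ^ 2 ∂P) ≤
      (1 - δ * μ / 2) * ‖yprev - ystar‖ ^ 2 + (2 / (δ * μ)) * K ^ 2
        + 4 * δ ^ 2 * σ ^ 2 := by
  set n := gradient g yprev with hn
  set a := yprev - ystar with ha
  set d := ystar' - ystar with hd
  have hgrad : gradient g ystar = 0 := gradient_eq_zero_of_forall_le g ystar hystar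
  have hmono : μ * ‖a‖ ^ 2 ≤ ⟪a, n⟫ := by
    have h1 := hsc yprev ystar
    have h2 := hsc ystar yprev
    rw [← neg_sub yprev ystar, ← ha, norm_neg, inner_neg_right, real_inner_comm] at h1
    rw [hgrad, inner_zero_left, ← ha] at h2
    linarith
  have hnL : ‖n‖ ^ 2 ≤ L ^ 2 * ‖a‖ ^ 2 := by
    have h := hlip yprev ystar
    rw [hgrad, sub_zero] at h
    rw [← mul_pow]
    exact pow_le_pow_left₀ (norm_nonneg _) h 2
  have hMem : MemLp G 2 P :=
    (memLp_two_iff_integrable_sq_norm hGm.aestronglyMeasurable).2 hGi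
  have hsplit : ∫ ω, ‖(yprev - δ • G ω) - ystar'‖ ^ 2 ∂P =
      ‖(a - δ • n) - d‖ ^ 2 + δ ^ 2 * ∫ ω, ‖G ω - n‖ ^ 2 ∂P := by
    have h := integral_norm_sq_sub_smul P G hMem (yprev - ystar') n hmean δ
    have e1 : (a - δ • n) - d = yprev - ystar' - δ • n := by
      rw [ha, hd]
      abel
    rw [e1, ← h]
    simp_rw [sub_right_comm yprev ystar']
  rw [hsplit]
  have ht : 0 < δ * μ := mul_pos hδ hμ
  have ht23 : δ * μ ≤ 2 / 3 := by
    rw [le_div_iff₀ (by positivity)] at hδ23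
    linarith
  have hstep : ‖a - δ • n‖ ^ 2 ≤ (1 - 2 * (δ * μ)) * ‖a‖ ^ 2 + δ ^ 2 * ‖n‖ ^ 2 := by
    rw [norm_sub_sq_real, inner_smul_right, norm_smul, mul_pow, Real.norm_eq_abs, sq_abs]
    linarith [mul_le_mul_of_nonneg_left hmono hδ.le]
  have hnoise : δ ^ 2 * (1 + σ ^ 2) * ‖n‖ ^ 2 ≤ δ * μ / 2 * ‖a‖ ^ 2 := by
    have h1 := mul_le_mul_of_nonneg_left hnL (by positivity : 0 ≤ δ ^ 2 * (1 + σ ^ 2))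
    have h2 := mul_le_mul_of_nonneg_right hδμ (by positivity : 0 ≤ δ / 2 * ‖a‖ ^ 2)
    linarith
  have hvar' := mul_le_mul_of_nonneg_left hvar (sq_nonneg δ)
  have hdK : ‖d‖ ^ 2 ≤ K ^ 2 := pow_le_pow_left₀ (norm_nonneg _) hdrift 2
  have hyoung := weighted_young (a - δ • n) d (δ * μ)
  set t := δ * μ with htdef
  have h2t : 0 < 2 - t := by linarith
  have hyoung' : ‖(a - δ • n) - d‖ ^ 2 ≤
      2 / (2 - t) * ‖a - δ • n‖ ^ 2 + 2 / t * ‖d‖ ^ 2 := by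
    have e : 2 / (2 - t) * ‖a - δ • n‖ ^ 2 + 2 / t * ‖d‖ ^ 2 =
        (2 * t * ‖a - δ • n‖ ^ 2 + 2 * (2 - t) * ‖d‖ ^ 2) / (t * (2 - t)) := by
      field_simp
    rw [e, le_div_iff₀ (by positivity)]
    linarith
  have hc : 1 ≤ 2 / (2 - t) := by
    rw [le_div_iff₀ h2t]
    linarith
  have hcoef : 2 / (2 - t) * (1 - 3 / 2 * t) ≤ 1 - t / 2 := by
    rw [div_mul_eq_mul_div, div_le_iff₀ h2t]
    nlinarith [sq_nonneg t]
  set c := 2 / (2 - t) with hcdef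
  have hc0 : 0 ≤ c := by linarith
  have h1 := mul_le_mul_of_nonneg_left hstep hc0
  have h2 := mul_le_mul_of_nonneg_left hnoise hc0
  have h3 := mul_le_mul_of_nonneg_right hc (by positivity : 0 ≤ δ ^ 2 * σ ^ 2 * ‖n‖ ^ 2)
  have h4 := mul_le_mul_of_nonneg_right hcoef (sq_nonneg ‖a‖)
  have h5 := mul_le_mul_of_nonneg_left hdK (by positivity : 0 ≤ 2 / t)
  have h6 : 0 ≤ δ ^ 2 * σ ^ 2 := by positivity
  linarith
end

section
/- Let (Ω, P) be a probability space and H a real Hilbert space. Let h0, h1 : Ω → H be strongly measurable with E‖h0‖² < ∞ and E‖h1‖² < ∞, and set m0 = E[h0], m1 = E[h1]. Assume E‖h1 − m1‖² ≤ σ² and E‖h1 − h0‖² ≤ M·η²·D² for nonnegative constants σ, M, η, D. Let y₋ ∈ H, δ ∈ [0,1], and define y(ω) = (1 − δ)(y₋ − h0(ω)) + h1(ω). Then E‖y − m1‖² ≤ (1 − δ)²·‖y₋ − m0‖² + 2δ²σ² + 2(1 − δ)²·M·η²·D². -/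
open MeasureTheory

/-!
Write `y - m1 = a + Z` with the deterministic part `a = (1 - δ) (yprev - m0)` and the centred noise
`Z = (1 - δ) W + δ (h1 - m1)`, where `W = (h1 - h0) - (m1 - m0)`. Since `E Z = 0`, the cross term
vanishes and `E‖y - m1‖² = ‖a‖² + E‖Z‖²`. Then `‖u + v‖² ≤ 2‖u‖² + 2‖v‖²` bounds `E‖Z‖²` by
`2 (1 - δ)² E‖W‖² + 2 δ² σ²`, and `E‖W‖² ≤ E‖h1 - h0‖²` because centring does not increase the
second moment. The vanishing cross term is in `integral_norm_sq_const_add_le`; both it and the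
centring bound rest on the expansion `integral_norm_sq_const_add`.
-/

/-- Expansion of the second moment of a translated square-integrable random vector. -/
lemma integral_norm_sq_const_add
    {Ω : Type*} [MeasurableSpace Ω] {P : Measure Ω} [IsProbabilityMeasure P]
    {H : Type*} [NormedAddCommGroup H] [InnerProductSpace ℝ H] [CompleteSpace H]
    {X : Ω → H} (hX : MemLp X 2 P) (c : H) :
    (∫ ω, ‖c + X ω‖ ^ 2 ∂P) =
      ‖c‖ ^ 2 + 2 * inner ℝ c (∫ ω, X ω ∂P) + ∫ ω, ‖X ω‖ ^ 2 ∂P := by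
  have hi : Integrable X P := hX.integrable (by norm_num)
  have hi2 : Integrable (fun ω => ‖X ω‖ ^ 2) P := hX.integrable_norm_pow (by norm_num)
  have hin : Integrable (fun ω => 2 * inner ℝ c (X ω)) P := (hi.const_inner c).const_mul 2
  have hs : Integrable (fun ω => ‖c‖ ^ 2 + 2 * inner ℝ c (X ω)) P :=
    (integrable_const _).add hin
  simp_rw [norm_add_sq_real]
  rw [integral_add hs hi2, integral_add (integrable_const _) hin,
    integral_const_mul, integral_inner hi]
  simp

lemma norm_sq_smul_add_smul_le
    {H : Type*} [NormedAddCommGroup H] [InnerProductSpace ℝ H] (a b : ℝ) (u v : H) :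
    ‖a • u + b • v‖ ^ 2 ≤ 2 * a ^ 2 * ‖u‖ ^ 2 + 2 * b ^ 2 * ‖v‖ ^ 2 := by
  have hpar := parallelogram_law_with_norm ℝ (a • u) (b • v)
  have e1 : ‖a • u‖ ^ 2 = a ^ 2 * ‖u‖ ^ 2 := by
    rw [norm_smul, mul_pow, Real.norm_eq_abs, sq_abs]
  have e2 : ‖b • v‖ ^ 2 = b ^ 2 * ‖v‖ ^ 2 := by
    rw [norm_smul, mul_pow, Real.norm_eq_abs, sq_abs]
  nlinarith [sq_nonneg ‖a • u - b • v‖]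

/-- Bound on the second moment of a constant plus a combination of two centred random vectors,
which may be dependent: centring kills the cross term with `c`, and the cross term between `W` and
`V` costs the factor `2`. -/
lemma integral_norm_sq_const_add_le
    {Ω : Type*} [MeasurableSpace Ω] {P : Measure Ω} [IsProbabilityMeasure P]
    {H : Type*} [NormedAddCommGroup H] [InnerProductSpace ℝ H] [CompleteSpace H]
    {W V : Ω → H} (hW : MemLp W 2 P) (hV : MemLp V 2 P)
    (hW0 : ∫ ω, W ω ∂P = 0) (hV0 : ∫ ω, V ω ∂P = 0) (a b : ℝ) (c : H) :
    (∫ ω, ‖c + (a • W ω + b • V ω)‖ ^ 2 ∂P) ≤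
      ‖c‖ ^ 2 + (2 * a ^ 2 * (∫ ω, ‖W ω‖ ^ 2 ∂P) + 2 * b ^ 2 * ∫ ω, ‖V ω‖ ^ 2 ∂P) := by
  have hZ : MemLp (fun ω => a • W ω + b • V ω) 2 P := (hW.const_smul a).add (hV.const_smul b)
  have hWi : Integrable (fun ω => 2 * a ^ 2 * ‖W ω‖ ^ 2) P :=
    (hW.integrable_norm_pow (by norm_num)).const_mul _
  have hVi : Integrable (fun ω => 2 * b ^ 2 * ‖V ω‖ ^ 2) P :=
    (hV.integrable_norm_pow (by norm_num)).const_mul _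
  have hWa : Integrable (fun ω => a • W ω) P := (hW.integrable (by norm_num)).smul a
  have hVb : Integrable (fun ω => b • V ω) P := (hV.integrable (by norm_num)).smul b
  have hZ0 : ∫ ω, (a • W ω + b • V ω) ∂P = 0 := by
    rw [integral_add hWa hVb, integral_smul, integral_smul, hW0, hV0, smul_zero, smul_zero,
      add_zero]
  rw [integral_norm_sq_const_add hZ, hZ0, inner_zero_right, mul_zero, add_zero,
    ← integral_const_mul, ← integral_const_mul, ← integral_add hWi hVi]
  gcongr ‖c‖ ^ 2 + ?_
  exact integral_mono (hZ.integrable_norm_pow (by norm_num)) (hWi.add hVi)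
    fun ω => norm_sq_smul_add_smul_le a b (W ω) (V ω)

/-- One-step form of Lemma 3 of the paper: momentum-based tracking of the inner
function value in the SCFW algorithm. -/
theorem scfw_inner_tracking_step
    {Ω : Type*} [MeasurableSpace Ω] (P : Measure Ω) [IsProbabilityMeasure P]
    {H : Type*} [NormedAddCommGroup H] [InnerProductSpace ℝ H] [CompleteSpace H]
    (h0 h1 : Ω → H)
    (hh0m : StronglyMeasurable h0) (hh1m : StronglyMeasurable h1)
    (hh0i : Integrable (fun ω => ‖h0 ω‖ ^ 2) P)
    (hh1i : Integrable (fun ω => ‖h1 ω‖ ^ 2) P)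
    (m0 m1 : H) (hm0 : m0 = ∫ ω, h0 ω ∂P) (hm1 : m1 = ∫ ω, h1 ω ∂P)
    (σ M η D : ℝ) (hσ : 0 ≤ σ) (hM : 0 ≤ M) (hη : 0 ≤ η) (hD : 0 ≤ D)
    (hvar : (∫ ω, ‖h1 ω - m1‖ ^ 2 ∂P) ≤ σ ^ 2)
    (hdiff : (∫ ω, ‖h1 ω - h0 ω‖ ^ 2 ∂P) ≤ M * η ^ 2 * D ^ 2)
    (yprev : H) (δ : ℝ) (hδ0 : 0 ≤ δ) (hδ1 : δ ≤ 1) :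
    (∫ ω, ‖((1 - δ) • (yprev - h0 ω) + h1 ω) - m1‖ ^ 2 ∂P) ≤
      (1 - δ) ^ 2 * ‖yprev - m0‖ ^ 2 + 2 * δ ^ 2 * σ ^ 2
        + 2 * (1 - δ) ^ 2 * M * η ^ 2 * D ^ 2 := by
  have hL0 : MemLp h0 2 P := (memLp_two_iff_integrable_sq_norm hh0m.aestronglyMeasurable).2 hh0i
  have hL1 : MemLp h1 2 P := (memLp_two_iff_integrable_sq_norm hh1m.aestronglyMeasurable).2 hh1i
  have hi0 : Integrable h0 P := hL0.integrable (by norm_num)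
  have hi1 : Integrable h1 P := hL1.integrable (by norm_num)
  have hLV : MemLp (fun ω => h1 ω - m1) 2 P := hL1.sub (memLp_const m1)
  have hLd : MemLp (fun ω => h1 ω - h0 ω) 2 P := hL1.sub hL0
  have hLW : MemLp (fun ω => -(m1 - m0) + (h1 ω - h0 ω)) 2 P :=
    (memLp_const (-(m1 - m0))).add hLd
  have hd : ∫ ω, (h1 ω - h0 ω) ∂P = m1 - m0 := by
    rw [integral_sub hi1 hi0, hm0, hm1]
  have hV0 : ∫ ω, (h1 ω - m1) ∂P = 0 := by
    rw [integral_sub hi1 (integrable_const _), ← hm1]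
    simp
  have hW0 : ∫ ω, (-(m1 - m0) + (h1 ω - h0 ω)) ∂P = 0 := by
    rw [integral_add (integrable_const _) (hLd.integrable (by norm_num)), hd]
    simp
  have hW2 : (∫ ω, ‖-(m1 - m0) + (h1 ω - h0 ω)‖ ^ 2 ∂P) ≤ M * η ^ 2 * D ^ 2 := by
    rw [integral_norm_sq_const_add hLd, hd, inner_neg_left, real_inner_self_eq_norm_sq, norm_neg]
    linarith [sq_nonneg ‖m1 - m0‖]
  have hdec : ∀ ω, ((1 - δ) • (yprev - h0 ω) + h1 ω) - m1 = (1 - δ) • (yprev - m0) +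
      ((1 - δ) • (-(m1 - m0) + (h1 ω - h0 ω)) + δ • (h1 ω - m1)) := fun ω => by module
  simp_rw [hdec]
  have hmain := integral_norm_sq_const_add_le hLW hLV hW0 hV0 (1 - δ) δ ((1 - δ) • (yprev - m0))
  rw [norm_smul, mul_pow, Real.norm_eq_abs, sq_abs] at hmain
  have b1 := mul_le_mul_of_nonneg_left hW2 (by positivity : 0 ≤ 2 * (1 - δ) ^ 2)
  have b2 := mul_le_mul_of_nonneg_left hvar (by positivity : 0 ≤ 2 * δ ^ 2)
  linarith
end

section
/- Let (Ω1, P1) and (Ω2, P2) be probability spaces and let H, H' be real Hilbert spaces. Let A : Ω1 → L(H', H) and b : Ω2 → H' be strongly measurable with E‖A‖² ≤ M_h and E‖b‖² ≤ M_f for constants M_h, M_f ≥ 0, and set m_A = E[A] ∈ L(H', H) and m_b = E[b] ∈ H' (Bochner integrals). Then, with expectation with respect to the product measure P1 ⊗ P2, E‖A(ω1)(b(ω2)) − m_A(m_b)‖² ≤ 4·M_f·M_h. -/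
open MeasureTheory

/-!
The parallelogram-type inequality `‖x - y‖² ≤ 2‖x‖² + 2‖y‖²` with `‖A b‖ ≤ ‖A‖ ‖b‖` and
`‖m_A m_b‖ ≤ ‖m_A‖ ‖m_b‖` bounds the integrand by `2‖A‖²‖b‖² + 2‖m_A‖²‖m_b‖²`. On the product
space the first term integrates to `2 E‖A‖² E‖b‖²`, and Jensen's inequality
(`norm_integral_sq_le`) bounds the second by the same quantity.
-/

/-- Jensen's inequality for the squared norm. With `c = ‖∫ f‖`, integrate
`2c‖f‖ ≤ ‖f‖² + c²` and use `c ≤ ∫ ‖f‖`. -/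
lemma norm_integral_sq_le {Ω E : Type*} [MeasurableSpace Ω] (P : Measure Ω)
    [IsProbabilityMeasure P] [NormedAddCommGroup E] [NormedSpace ℝ E] (f : Ω → E)
    (hf : Integrable (fun ω => ‖f ω‖ ^ 2) P) :
    ‖∫ ω, f ω ∂P‖ ^ 2 ≤ ∫ ω, ‖f ω‖ ^ 2 ∂P := by
  set c := ‖∫ ω, f ω ∂P‖ with hc
  have hc0 : 0 ≤ c := norm_nonneg _
  have h1 : c ≤ ∫ ω, ‖f ω‖ ∂P := norm_integral_le_integral_norm f
  have h2 : ∫ ω, 2 * c * ‖f ω‖ ∂P ≤ ∫ ω, (‖f ω‖ ^ 2 + c ^ 2) ∂P := by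
    refine integral_mono_of_nonneg (.of_forall fun ω => by positivity)
      (hf.add (integrable_const _)) (.of_forall fun ω => ?_)
    change 2 * c * ‖f ω‖ ≤ ‖f ω‖ ^ 2 + c ^ 2
    nlinarith [sq_nonneg (‖f ω‖ - c)]
  rw [integral_const_mul, integral_add hf (integrable_const _)] at h2
  simp only [integral_const, probReal_univ, one_smul] at h2
  nlinarith [mul_le_mul_of_nonneg_left h1 hc0]

/-- Variance bound for the stochastic compositional gradient estimator
(Lemma 7 of the paper): the product of an independent stochastic Jacobian and
stochastic outer gradient has second moment centred at the product of means
bounded by `4 M_f M_h`. -/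
theorem compositional_gradient_variance_bound
    {Ω1 Ω2 : Type*} [MeasurableSpace Ω1] [MeasurableSpace Ω2]
    (P1 : Measure Ω1) (P2 : Measure Ω2)
    [IsProbabilityMeasure P1] [IsProbabilityMeasure P2]
    {H H' : Type*} [NormedAddCommGroup H] [InnerProductSpace ℝ H] [CompleteSpace H]
    [NormedAddCommGroup H'] [InnerProductSpace ℝ H'] [CompleteSpace H']
    (A : Ω1 → (H' →L[ℝ] H)) (b : Ω2 → H')
    (hAm : StronglyMeasurable A) (hbm : StronglyMeasurable b)
    (Mh Mf : ℝ) (hMh : 0 ≤ Mh) (hMf : 0 ≤ Mf)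
    (hAi : Integrable (fun ω => ‖A ω‖ ^ 2) P1)
    (hAbd : (∫ ω, ‖A ω‖ ^ 2 ∂P1) ≤ Mh)
    (hbi : Integrable (fun ω => ‖b ω‖ ^ 2) P2)
    (hbbd : (∫ ω, ‖b ω‖ ^ 2 ∂P2) ≤ Mf)
    (mA : H' →L[ℝ] H) (hmA : mA = ∫ ω, A ω ∂P1)
    (mb : H') (hmb : mb = ∫ ω, b ω ∂P2) :
    (∫ ω, ‖(A ω.1) (b ω.2) - mA mb‖ ^ 2 ∂(P1.prod P2)) ≤ 4 * Mf * Mh := by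
  have hA := norm_integral_sq_le P1 A hAi
  have hb := norm_integral_sq_le P2 b hbi
  rw [← hmA] at hA
  rw [← hmb] at hb
  have hprod : Integrable (fun ω : Ω1 × Ω2 => ‖A ω.1‖ ^ 2 * ‖b ω.2‖ ^ 2) (P1.prod P2) :=
    hAi.mul_prod hbi
  have hmono : (∫ ω, ‖(A ω.1) (b ω.2) - mA mb‖ ^ 2 ∂(P1.prod P2)) ≤
      ∫ ω, (2 * (‖A ω.1‖ ^ 2 * ‖b ω.2‖ ^ 2) + 2 * (‖mA‖ ^ 2 * ‖mb‖ ^ 2)) ∂(P1.prod P2) := by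
    refine integral_mono_of_nonneg (.of_forall fun ω => by positivity)
      ((hprod.const_mul 2).add (integrable_const _)) (.of_forall fun ω => ?_)
    change ‖(A ω.1) (b ω.2) - mA mb‖ ^ 2 ≤
      2 * (‖A ω.1‖ ^ 2 * ‖b ω.2‖ ^ 2) + 2 * (‖mA‖ ^ 2 * ‖mb‖ ^ 2)
    have h1 : ‖(A ω.1) (b ω.2) - mA mb‖ ≤ ‖A ω.1‖ * ‖b ω.2‖ + ‖mA‖ * ‖mb‖ :=
      (norm_sub_le _ _).trans (add_le_add ((A ω.1).le_opNorm _) (mA.le_opNorm _))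
    have h2 := pow_le_pow_left₀ (norm_nonneg _) h1 2
    nlinarith [sq_nonneg (‖A ω.1‖ * ‖b ω.2‖ - ‖mA‖ * ‖mb‖)]
  rw [integral_add (hprod.const_mul 2) (integrable_const _), integral_const_mul,
    integral_prod_mul (fun ω => ‖A ω‖ ^ 2) (fun ω => ‖b ω‖ ^ 2)] at hmono
  simp only [integral_const, probReal_univ, one_smul] at hmono
  have h1 : (∫ ω, ‖A ω‖ ^ 2 ∂P1) * (∫ ω, ‖b ω‖ ^ 2 ∂P2) ≤ Mh * Mf :=
    mul_le_mul hAbd hbbd (integral_nonneg fun ω => by positivity) hMh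
  have h2 : ‖mA‖ ^ 2 * ‖mb‖ ^ 2 ≤ Mh * Mf :=
    mul_le_mul (hA.trans hAbd) (hb.trans hbbd) (by positivity) hMh
  linarith
end

section
/- Let H be a real Hilbert space and let Q : H → ℝ be differentiable, convex, with L-Lipschitz gradient ∇Q for some L ≥ 0. Let x, x*, s, d ∈ H, D ≥ 0, and η ∈ [0,1] satisfy ‖s − x‖ ≤ D, ‖s − x*‖ ≤ D, and ⟨s, d⟩ ≤ ⟨x*, d⟩. Define x₊ = (1 − η)·x + η·s. Then Q(x₊) − Q(x*) ≤ (1 − η)·(Q(x) − Q(x*)) + η·D·‖∇Q(x) − d‖ + (L/2)·η²·D². -/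
/-! The step follows from two standard inequalities for `g = ∇Q(x)`: the descent lemma
`Q (x + η(s - x)) ≤ Q x + η⟪g, s - x⟫ + (L/2) η² ‖s - x‖²` (`descent_along_segment`) and the
gradient inequality `⟪g, x* - x⟫ ≤ Q x* - Q x` (`inner_gradient_le_sub`). They are linked by
`⟪g, s - x⟫ = ⟪g - d, s - x*⟫ + ⟪d, s - x*⟫ + ⟪g, x* - x⟫`, in which the first term is at most
`D‖g - d‖` by Cauchy–Schwarz and the second is nonpositive by the choice of `s`. -/

open scoped RealInnerProductSpace

theorem hasDerivAt_along_line
    {H : Type*} [NormedAddCommGroup H] [InnerProductSpace ℝ H] [CompleteSpace H]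
    {Q : H → ℝ} (hdiff : Differentiable ℝ Q) (x v : H) (t : ℝ) :
    HasDerivAt (fun t : ℝ => Q (x + t • v)) ⟪gradient Q (x + t • v), v⟫ t := by
  have h1 : HasDerivAt (fun t : ℝ => x + t • v) v t := by
    simpa using ((hasDerivAt_id t).smul_const v).const_add x
  have h2 := (hdiff (x + t • v)).hasGradientAt.hasFDerivAt.comp_hasDerivAt t h1
  simpa [Function.comp_def] using h2

/-- The descent lemma along the ray `x + t • v`. It holds because
`Q (x + t • v) - t⟪∇Q(x), v⟫ - (L/2) t² ‖v‖²` has nonpositive derivative for `t ≥ 0`. -/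
theorem descent_along_segment
    {H : Type*} [NormedAddCommGroup H] [InnerProductSpace ℝ H] [CompleteSpace H]
    {Q : H → ℝ} {L : ℝ} (hdiff : Differentiable ℝ Q)
    (hlip : ∀ u v : H, ‖gradient Q u - gradient Q v‖ ≤ L * ‖u - v‖)
    (x v : H) {η : ℝ} (hη : 0 ≤ η) :
    Q (x + η • v) ≤ Q x + η * ⟪gradient Q x, v⟫ + L / 2 * η ^ 2 * ‖v‖ ^ 2 := by
  have hder : ∀ t : ℝ, HasDerivAt
      (fun t : ℝ => Q (x + t • v) - t * ⟪gradient Q x, v⟫ - L / 2 * t ^ 2 * ‖v‖ ^ 2)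
      (⟪gradient Q (x + t • v), v⟫ - ⟪gradient Q x, v⟫ - L * t * ‖v‖ ^ 2) t := by
    intro t
    have h2 := (hasDerivAt_id t).mul_const ⟪gradient Q x, v⟫
    have h3 := (((hasDerivAt_id t).pow 2).const_mul (L / 2)).mul_const (‖v‖ ^ 2)
    refine (((hasDerivAt_along_line hdiff x v t).sub h2).sub h3).congr_deriv ?_
    simp only [id]
    push_cast
    ring
  have hanti := antitoneOn_of_deriv_nonpos (convex_Ici (0 : ℝ))
    (fun t _ => (hder t).continuousAt.continuousWithinAt)
    (fun t _ => (hder t).differentiableAt.differentiableWithinAt) (by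
      intro t ht
      rw [interior_Ici, Set.mem_Ioi] at ht
      rw [(hder t).deriv, ← inner_sub_left]
      have h1 := real_inner_le_norm (gradient Q (x + t • v) - gradient Q x) v
      have h2 := hlip (x + t • v) x
      rw [add_sub_cancel_left, norm_smul, Real.norm_of_nonneg ht.le] at h2
      nlinarith [mul_le_mul_of_nonneg_right h2 (norm_nonneg v)])
  have h := hanti (Set.mem_Ici.2 le_rfl) (Set.mem_Ici.2 hη) hη
  simp only [zero_smul, add_zero, zero_mul, sub_zero] at h
  linarith

/-- A differentiable convex function lies above its tangent plane. -/
theorem inner_gradient_le_sub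
    {H : Type*} [NormedAddCommGroup H] [InnerProductSpace ℝ H] [CompleteSpace H]
    {Q : H → ℝ} (hdiff : Differentiable ℝ Q) (hconv : ConvexOn ℝ Set.univ Q) (x y : H) :
    ⟪gradient Q x, y - x⟫ ≤ Q y - Q x := by
  have hc : ConvexOn ℝ Set.univ (fun t : ℝ => Q (x + t • (y - x))) := by
    have h := hconv.comp_affineMap (AffineMap.lineMap (k := ℝ) x y)
    simpa [Function.comp_def, AffineMap.lineMap_apply, add_comm] using h
  have h := hc.le_slope_of_hasDerivAt (Set.mem_univ 0) (Set.mem_univ 1) zero_lt_one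
    (hasDerivAt_along_line hdiff x (y - x) 0)
  simpa [slope_def_field] using h

/-- Per-iteration inequality for the Frank–Wolfe update with an inexact gradient
direction, convex case (deterministic core of Theorems 1 and 2 of the paper). -/
theorem frank_wolfe_step_convex
    {H : Type*} [NormedAddCommGroup H] [InnerProductSpace ℝ H] [CompleteSpace H]
    (Q : H → ℝ) (L : ℝ) (hL : 0 ≤ L)
    (hdiff : Differentiable ℝ Q)
    (hconv : ConvexOn ℝ Set.univ Q)
    (hlip : ∀ u v : H, ‖gradient Q u - gradient Q v‖ ≤ L * ‖u - v‖)
    (x xstar s d : H) (D η : ℝ) (hD : 0 ≤ D) (hη0 : 0 ≤ η) (hη1 : η ≤ 1)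
    (hsx : ‖s - x‖ ≤ D) (hsxstar : ‖s - xstar‖ ≤ D)
    (hlin : ⟪s, d⟫ ≤ ⟪xstar, d⟫) :
    Q ((1 - η) • x + η • s) - Q xstar ≤
      (1 - η) * (Q x - Q xstar) + η * D * ‖gradient Q x - d‖
        + (L / 2) * η ^ 2 * D ^ 2 := by
  have hpt : (1 - η) • x + η • s = x + η • (s - x) := by module
  have hdesc := descent_along_segment hdiff hlip x (s - x) hη0
  have hgrad := inner_gradient_le_sub hdiff hconv x xstar
  have hsplit : ⟪gradient Q x, s - x⟫ = ⟪gradient Q x - d, s - xstar⟫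
      + (⟪s, d⟫ - ⟪xstar, d⟫) + ⟪gradient Q x, xstar - x⟫ := by
    rw [real_inner_comm d s, real_inner_comm d xstar]
    simp only [inner_sub_left, inner_sub_right]
    ring
  have hcs : ⟪gradient Q x - d, s - xstar⟫ ≤ D * ‖gradient Q x - d‖ := by
    rw [mul_comm D]
    exact (real_inner_le_norm _ _).trans (by gcongr)
  have hinner : ⟪gradient Q x, s - x⟫ ≤ D * ‖gradient Q x - d‖ + (Q xstar - Q x) := by
    linarith
  have hquad : L / 2 * η ^ 2 * ‖s - x‖ ^ 2 ≤ L / 2 * η ^ 2 * D ^ 2 := by gcongr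
  have hlinear := mul_le_mul_of_nonneg_left hinner hη0
  rw [hpt]
  linarith
end

section
/- Let H be a real Hilbert space and let Q : H → ℝ be differentiable with L-Lipschitz gradient ∇Q for some L ≥ 0. Let x, s, v̂, d ∈ H, D ≥ 0, and η ∈ [0,1] satisfy ‖s − x‖ ≤ D, ‖v̂ − x‖ ≤ D, and ⟨s, d⟩ ≤ ⟨v̂, d⟩. Define the Frank–Wolfe gap value G = ⟨v̂ − x, −∇Q(x)⟩ and x₊ = (1 − η)·x + η·s. Then Q(x₊) ≤ Q(x) − η·G + 2·η·D·‖d − ∇Q(x)‖ + (L/2)·η²·D². -/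
/-!
The smoothness of `Q` gives the descent lemma
`Q (x + w) ≤ Q x + ⟪∇Q x, w⟫ + (L / 2) ‖w‖²`, applied here with `w = η (s - x)`.
The linear term is controlled by the splitting
`⟪∇Q x, s - x⟫ = ⟪∇Q x - d, s - v̂⟫ + ⟪d, s - v̂⟫ + ⟪∇Q x, v̂ - x⟫`:
the first summand is at most `2 D ‖d - ∇Q x‖` by Cauchy–Schwarz, the second is nonpositive by the
choice of `s`, and the third is the negative of the Frank–Wolfe gap.
-/

open scoped RealInnerProductSpace

/-- Descent lemma: a function with `L`-Lipschitz gradient lies below its quadratic upper model.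
Both sides are compared along the segment from `x` to `x + w`, where the derivatives are ordered. -/
lemma descent_lemma {H : Type*} [NormedAddCommGroup H] [InnerProductSpace ℝ H] [CompleteSpace H]
    (Q : H → ℝ) (L : ℝ) (hdiff : Differentiable ℝ Q)
    (hlip : ∀ u v : H, ‖gradient Q u - gradient Q v‖ ≤ L * ‖u - v‖) (x w : H) :
    Q (x + w) ≤ Q x + ⟪gradient Q x, w⟫ + L / 2 * ‖w‖ ^ 2 := by
  have hf : ∀ t : ℝ, HasDerivAt (fun t : ℝ => Q (x + t • w)) ⟪gradient Q (x + t • w), w⟫ t := by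
    intro t
    have h1 : HasDerivAt (fun t : ℝ => x + t • w) w t := by
      simpa using ((hasDerivAt_id t).smul_const w).const_add x
    have h2 := (hdiff (x + t • w)).hasGradientAt.hasFDerivAt.comp_hasDerivAt t h1
    exact h2
  have hB : ∀ t : ℝ, HasDerivAt
      (fun t : ℝ => Q x + t * ⟪gradient Q x, w⟫ + L / 2 * ‖w‖ ^ 2 * t ^ 2)
      (⟪gradient Q x, w⟫ + L * ‖w‖ ^ 2 * t) t := by
    intro t
    have h := (((hasDerivAt_id t).mul_const ⟪gradient Q x, w⟫).const_add (Q x)).add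
      (((hasDerivAt_id t).pow 2).const_mul (L / 2 * ‖w‖ ^ 2))
    refine (h.congr_deriv ?_)
    simp
    ring
  have key := image_le_of_deriv_right_le_deriv_boundary (a := 0) (b := 1)
    (fun t _ => (hf t).continuousAt.continuousWithinAt)
    (fun t _ => (hf t).hasDerivWithinAt) (by simp)
    (fun t _ => (hB t).continuousAt.continuousWithinAt)
    (fun t _ => (hB t).hasDerivWithinAt) (fun t ht => by
      have h1 := real_inner_le_norm (gradient Q (x + t • w) - gradient Q x) w
      have h2 := hlip (x + t • w) x
      rw [add_sub_cancel_left, norm_smul, Real.norm_of_nonneg ht.1] at h2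
      have h3 := mul_le_mul_of_nonneg_right h2 (norm_nonneg w)
      rw [inner_sub_left] at h1
      linarith)
    (Set.right_mem_Icc.2 zero_le_one)
  simpa using key

/-- Per-iteration inequality for the Frank–Wolfe update with an inexact gradient
direction, non-convex case (driving the non-convex rates of Theorems 1 and 2). -/
theorem frank_wolfe_step_nonconvex
    {H : Type*} [NormedAddCommGroup H] [InnerProductSpace ℝ H] [CompleteSpace H]
    (Q : H → ℝ) (L : ℝ) (hL : 0 ≤ L)
    (hdiff : Differentiable ℝ Q)
    (hlip : ∀ u v : H, ‖gradient Q u - gradient Q v‖ ≤ L * ‖u - v‖)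
    (x s vhat d : H) (D η : ℝ) (hD : 0 ≤ D) (hη0 : 0 ≤ η) (hη1 : η ≤ 1)
    (hsx : ‖s - x‖ ≤ D) (hvx : ‖vhat - x‖ ≤ D)
    (hlin : ⟪s, d⟫ ≤ ⟪vhat, d⟫) :
    Q ((1 - η) • x + η • s) ≤
      Q x - η * ⟪vhat - x, -gradient Q x⟫
        + 2 * η * D * ‖d - gradient Q x‖ + (L / 2) * η ^ 2 * D ^ 2 := by
  have hx : (1 - η) • x + η • s = x + η • (s - x) := by module
  have hdesc := descent_lemma Q L hdiff hlip x (η • (s - x))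
  rw [inner_smul_right, norm_smul, Real.norm_of_nonneg hη0] at hdesc
  have hsq : ‖s - x‖ ^ 2 ≤ D ^ 2 := pow_le_pow_left₀ (norm_nonneg _) hsx 2
  have hquad : L / 2 * (η * ‖s - x‖) ^ 2 ≤ L / 2 * η ^ 2 * D ^ 2 := by
    rw [mul_pow, ← mul_assoc]
    gcongr
  have hsv : ‖s - vhat‖ ≤ 2 * D := by
    have h := norm_sub_le (s - x) (vhat - x)
    rw [sub_sub_sub_cancel_right] at h
    linarith
  have hcs : ⟪gradient Q x - d, s - vhat⟫ ≤ ‖d - gradient Q x‖ * (2 * D) := by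
    refine (real_inner_le_norm _ _).trans ?_
    rw [norm_sub_rev]
    gcongr
  have hinner : ⟪gradient Q x, s - x⟫ ≤
      2 * D * ‖d - gradient Q x‖ - ⟪vhat - x, -gradient Q x⟫ := by
    rw [real_inner_comm d s, real_inner_comm d vhat] at hlin
    rw [inner_neg_right, real_inner_comm (gradient Q x) (vhat - x)]
    simp only [inner_sub_left, inner_sub_right] at hcs ⊢
    linarith
  have hlinear := mul_le_mul_of_nonneg_left hinner hη0
  rw [hx]
  linarith
end

section
/- Let T ≥ 1 be an integer, let D, L, E0, Δ be nonnegative reals, and set η = 2/(T+1)^{2/3}. Let g, e : ℕ → ℝ be such that e(t) ≤ E0/(t+1)^{1/3} for all 1 ≤ t ≤ T, and suppose η·∑_{t=1}^{T} g(t) ≤ Δ + 2·D·η·∑_{t=1}^{T} e(t) + (L·D²/2)·T·η². Then (1/T)·∑_{t=1}^{T} g(t) ≤ Δ/(T+1)^{1/3} + (6·D·E0)/(T+1)^{1/3} + L·D²/(T+1)^{2/3}. -/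
/-! Write `s = (T + 1)^(1/3)`, so that `η = 2 / s²`. Dividing the hypothesis by `η T` gives
three terms: `Δ s² / (2 T)`, which is at most `Δ / s` because `s³ = T + 1 ≤ 2 T`; the smoothness
term, which is exactly `L D² / s²`; and `2 D` times the average of `e`. The last one is controlled
by the integral-type bound `∑_{t=1}^{T} (t+1)^(-1/3) ≤ (3/2) (T+1)^(2/3)` (`sum_inv_cbrt_le`),
whose right-hand side is at most `3 T / s`, again by `s³ ≤ 2 T`. -/

open Real Finset

lemma cbrt_cube (n : ℕ) : (((n : ℝ) + 1) ^ ((1 : ℝ) / 3)) ^ 3 = (n : ℝ) + 1 := by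
  rw [← Real.rpow_natCast, ← Real.rpow_mul (by positivity)]
  norm_num

lemma cbrt_sq (n : ℕ) :
    ((n : ℝ) + 1) ^ ((2 : ℝ) / 3) = (((n : ℝ) + 1) ^ ((1 : ℝ) / 3)) ^ 2 := by
  rw [← Real.rpow_natCast, ← Real.rpow_mul (by positivity)]
  norm_num

/-- Discrete form of `∫ x^(-1/3) dx = (3/2) x^(2/3)`. -/
lemma sum_inv_cbrt_le (T : ℕ) :
    ∑ t ∈ Finset.Icc 1 T, 1 / ((t : ℝ) + 1) ^ ((1 : ℝ) / 3) ≤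
      3 / 2 * (((T : ℝ) + 1) ^ ((1 : ℝ) / 3)) ^ 2 := by
  induction T with
  | zero => norm_num
  | succ n ih =>
    rw [Finset.sum_Icc_succ_top (by omega)]
    have ha := cbrt_cube n
    have hb := cbrt_cube (n + 1)
    have ha0 : 0 < ((n : ℝ) + 1) ^ ((1 : ℝ) / 3) := by positivity
    have hb0 : 0 < (((n + 1 : ℕ) : ℝ) + 1) ^ ((1 : ℝ) / 3) := by positivity
    generalize ((n : ℝ) + 1) ^ ((1 : ℝ) / 3) = a at *
    generalize (((n + 1 : ℕ) : ℝ) + 1) ^ ((1 : ℝ) / 3) = b at *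
    push_cast at hb
    have hba : b ^ 3 - a ^ 3 = 1 := by linarith
    -- As `b³ - a³ = 1`, the step amounts to `b³ - 3 a² b + 2 a³ = (b - a)² (b + 2 a) ≥ 0`.
    have step : 1 / b ≤ 3 / 2 * (b ^ 2 - a ^ 2) := by
      rw [div_le_iff₀ hb0]
      have : 0 ≤ (b - a) ^ 2 * (b + 2 * a) := by positivity
      nlinarith
    linarith

/-- Deterministic averaging step of the non-convex case of Theorem 2 (SCFW):
yields the O(T^{-1/3}) rate for the expected Frank–Wolfe gap. -/
theorem scfw_nonconvex_averaging
    (T : ℕ) (hT : 1 ≤ T) (D L E0 Δ : ℝ)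
    (hD : 0 ≤ D) (hL : 0 ≤ L) (hE0 : 0 ≤ E0) (hΔ : 0 ≤ Δ)
    (η : ℝ) (hη : η = 2 / ((T : ℝ) + 1) ^ ((2 : ℝ) / 3))
    (g e : ℕ → ℝ)
    (he : ∀ t : ℕ, 1 ≤ t → t ≤ T → e t ≤ E0 / ((t : ℝ) + 1) ^ ((1 : ℝ) / 3))
    (hsum : η * ∑ t ∈ Finset.Icc 1 T, g t ≤
      Δ + 2 * D * η * ∑ t ∈ Finset.Icc 1 T, e t
        + (L * D ^ 2 / 2) * (T : ℝ) * η ^ 2) :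
    (1 / (T : ℝ)) * ∑ t ∈ Finset.Icc 1 T, g t ≤
      Δ / ((T : ℝ) + 1) ^ ((1 : ℝ) / 3)
        + (6 * D * E0) / ((T : ℝ) + 1) ^ ((1 : ℝ) / 3)
        + L * D ^ 2 / ((T : ℝ) + 1) ^ ((2 : ℝ) / 3) := by
  have hT1 : (1 : ℝ) ≤ T := by exact_mod_cast hT
  have hT0 : (0 : ℝ) < T := by linarith
  have hS := sum_inv_cbrt_le T
  have he' : ∑ t ∈ Finset.Icc 1 T, e t ≤
      E0 * ∑ t ∈ Finset.Icc 1 T, 1 / ((t : ℝ) + 1) ^ ((1 : ℝ) / 3) := by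
    rw [Finset.mul_sum]
    refine Finset.sum_le_sum fun t ht => ?_
    rw [Finset.mem_Icc] at ht
    rw [mul_one_div]
    exact he t ht.1 ht.2
  have he2 := he'.trans (mul_le_mul_of_nonneg_left hS hE0)
  have hc := cbrt_cube T
  have hs : 0 < ((T : ℝ) + 1) ^ ((1 : ℝ) / 3) := by positivity
  rw [cbrt_sq] at hη ⊢
  clear he he' hS
  generalize ((T : ℝ) + 1) ^ ((1 : ℝ) / 3) = s at *
  generalize ∑ t ∈ Finset.Icc 1 T, g t = G at *
  generalize ∑ t ∈ Finset.Icc 1 T, e t = E at *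
  have hη0 : 0 < η := by rw [hη]; positivity
  have hG : G ≤ Δ * s ^ 2 / 2 + 2 * D * E + L * D ^ 2 * T / s ^ 2 := by
    refine le_of_mul_le_mul_left (hsum.trans_eq ?_) hη0
    rw [hη]
    field_simp
  have hDE : 2 * D * E ≤ 2 * D * (E0 * (3 / 2 * s ^ 2)) :=
    mul_le_mul_of_nonneg_left he2 (by positivity)
  have hs2 : s ^ 2 ≤ 2 * T / s := by
    rw [le_div_iff₀ hs]
    nlinarith
  have hmul : (Δ / 2 + 3 * D * E0) * s ^ 2 ≤ (Δ / 2 + 3 * D * E0) * (2 * T / s) :=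
    mul_le_mul_of_nonneg_left hs2 (by positivity)
  rw [one_div, inv_mul_le_iff₀ hT0]
  have hfin : (T : ℝ) * (Δ / s + 6 * D * E0 / s + L * D ^ 2 / s ^ 2) =
      (Δ / 2 + 3 * D * E0) * (2 * T / s) + L * D ^ 2 * T / s ^ 2 := by
    field_simp
    ring
  rw [hfin]
  linarith
end

section
/- Let H1 be a real normed space and H2 a real Hilbert space, let μ > 0 and C ≥ 0, and let g : H1 × H2 → ℝ be such that for every x ∈ H1 the map y ↦ g(x, y) is differentiable and μ-strongly convex on H2, and the partial gradient satisfies ‖∇_y g(x1, y) − ∇_y g(x2, y)‖ ≤ C·‖x1 − x2‖ for all x1, x2 ∈ H1 and y ∈ H2. If y1* is a global minimizer of y ↦ g(x1, y) and y2* is a global minimizer of y ↦ g(x2, y), then ‖y1* − y2*‖ ≤ (C/μ)·‖x1 − x2‖. -/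
/-!
Both partial gradients vanish at their minimizers. Adding the two strong convexity inequalities
of `g (x1, ·)` between `y1` and `y2` gives `μ ‖y1 - y2‖² ≤ -⟪∇g (x1, ·) y2, y1 - y2⟫`. Since
`∇g (x2, ·) y2 = 0`, the Lipschitz hypothesis at `y2` bounds `‖∇g (x1, ·) y2‖` by `C ‖x1 - x2‖`,
and Cauchy–Schwarz followed by division by `‖y1 - y2‖` concludes.
-/

open scoped RealInnerProductSpace

/-- Lipschitz continuity of the inner minimizer map (Lemma 4(b) of the paper). -/
theorem inner_minimizer_lipschitz
    {H1 : Type*} [NormedAddCommGroup H1] [NormedSpace ℝ H1]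
    {H2 : Type*} [NormedAddCommGroup H2] [InnerProductSpace ℝ H2] [CompleteSpace H2]
    (μ C : ℝ) (hμ : 0 < μ) (hC : 0 ≤ C)
    (g : H1 × H2 → ℝ)
    (hdiff : ∀ x : H1, Differentiable ℝ (fun y : H2 => g (x, y)))
    (hsc : ∀ (x : H1) (y z : H2),
      g (x, z) ≥ g (x, y) + ⟪gradient (fun y' : H2 => g (x, y')) y, z - y⟫
        + (μ / 2) * ‖z - y‖ ^ 2)
    (hlip : ∀ (x1 x2 : H1) (y : H2),
      ‖gradient (fun y' : H2 => g (x1, y')) y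
        - gradient (fun y' : H2 => g (x2, y')) y‖ ≤ C * ‖x1 - x2‖)
    (x1 x2 : H1) (y1 y2 : H2)
    (hy1 : ∀ z : H2, g (x1, y1) ≤ g (x1, z))
    (hy2 : ∀ z : H2, g (x2, y2) ≤ g (x2, z)) :
    ‖y1 - y2‖ ≤ (C / μ) * ‖x1 - x2‖ := by
  have hgrad : ∀ (x : H1) (y : H2), (∀ z, g (x, y) ≤ g (x, z)) →
      gradient (fun y' : H2 => g (x, y')) y = 0 := by
    intro x y h
    have hmin : IsLocalMin (fun y' : H2 => g (x, y')) y := Filter.Eventually.of_forall h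
    rw [gradient, hmin.fderiv_eq_zero, map_zero]
  have hg1 := hgrad x1 y1 hy1
  have hg2 := hgrad x2 y2 hy2
  have h12 := hsc x1 y1 y2
  have h21 := hsc x1 y2 y1
  have hl := hlip x1 x2 y2
  rw [hg1, inner_zero_left, norm_sub_rev y2 y1] at h12
  rw [hg2, sub_zero] at hl
  set v := gradient (fun y' : H2 => g (x1, y')) y2
  have hcs : -⟪v, y1 - y2⟫ ≤ ‖v‖ * ‖y1 - y2‖ :=
    (neg_le_abs _).trans (abs_real_inner_le_norm _ _)
  have hsq : μ * ‖y1 - y2‖ ^ 2 ≤ C * ‖x1 - x2‖ * ‖y1 - y2‖ := by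
    have := mul_le_mul_of_nonneg_right hl (norm_nonneg (y1 - y2))
    linarith
  rw [div_mul_eq_mul_div, le_div_iff₀ hμ]
  rcases (norm_nonneg (y1 - y2)).eq_or_lt with h0 | hpos
  · rw [← h0, zero_mul]
    positivity
  · refine le_of_mul_le_mul_right ?_ hpos
    linarith
end
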